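/- Let S₁, S₂ be 2-dimensional complex vector spaces, and on the space of triples (p₁, p₂, a) ∈ End(S₁) × End(S₂) × Hom(S₂,S₁), define C = {a p₂ = p₁ a, det p₁ = det p₂, Tr p₁ = Tr p₂}. Then the restriction of the Koszul-type free resolution of O_C to a = 0, p₁ = p₂ = 0 contains exactly the GL(S₂)-irreducible representations ℂ (trivial), S₂, and det S₂, i.e., Tor groups of O_C at the origin, as GL(S₂)-representations, involve only these three irreducibles. -/

import Mathlib

noncomputable section

open MvPolynomial

/-- Points `(p₁, p₂, a) ∈ End(S₁) × End(S₂) × Hom(S₂,S₁)`. -/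
abbrev Pt19 := Matrix (Fin 2) (Fin 2) ℂ × Matrix (Fin 2) (Fin 2) ℂ ×
  Matrix (Fin 2) (Fin 2) ℂ

abbrev Idx19 := (Fin 2 × Fin 2) ⊕ (Fin 2 × Fin 2) ⊕ (Fin 2 × Fin 2)

/-- The polynomial ring `R = ℂ[End(S₁) × End(S₂) × Hom(S₂,S₁)]`. -/
abbrev R19 := MvPolynomial Idx19 ℂ

def coords19 (t : Pt19) : Idx19 → ℂ :=
  Sum.elim (fun ij => t.1 ij.1 ij.2)
    (Sum.elim (fun ij => t.2.1 ij.1 ij.2) (fun ij => t.2.2 ij.1 ij.2))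

/-- `C = {a p₂ = p₁ a, det p₁ = det p₂, Tr p₁ = Tr p₂}`, the closure of the
conjugation locus. -/
def C19 : Set Pt19 :=
  {t | t.2.2 * t.2.1 = t.1 * t.2.2 ∧ t.1.det = t.2.1.det ∧ t.1.trace = t.2.1.trace}

/-- The vanishing ideal of `C`; `O_C = R19 ⧸ J19`. -/
def J19 : Ideal R19 where
  carrier := {f | ∀ t ∈ C19, eval (coords19 t) f = 0}
  add_mem' := fun ha hb t ht => by simp [map_add, ha t ht, hb t ht]
  zero_mem' := fun t ht => by simp
  smul_mem' := fun c f hf t ht => by simp [smul_eq_mul, map_mul, hf t ht]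

/-- The substitution action of `g ∈ GL(S₂)` on `R19`, induced by
`g·(p₁,p₂,a) = (p₁, g p₂ g⁻¹, a g⁻¹)`. -/
def σ19 (g : Matrix.GeneralLinearGroup (Fin 2) ℂ) : R19 →ₐ[ℂ] R19 :=
  aeval (Sum.elim (fun ij => X (Sum.inl ij))
    (Sum.elim
      (fun ij => ∑ k : Fin 2, ∑ l : Fin 2,
        C ((↑g⁻¹ : Matrix (Fin 2) (Fin 2) ℂ) ij.1 k *
           (↑g : Matrix (Fin 2) (Fin 2) ℂ) l ij.2) * X (Sum.inr (Sum.inl (k, l))))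
      (fun ij => ∑ l : Fin 2,
        C ((↑g : Matrix (Fin 2) (Fin 2) ℂ) l ij.2) * X (Sum.inr (Sum.inr (ij.1, l))))))

/-- A free `R19`-module which is a direct sum of `a` copies of the trivial
`GL(S₂)`-representation `ℂ`, `b` copies of `S₂`, and `c` copies of `det S₂`. -/
abbrev Blk (a b c : ℕ) := (Fin a → R19) × (Fin b → Fin 2 → R19) × (Fin c → R19)

/-- The `GL(S₂)`-action on such a block. -/
def actBlk {a b c : ℕ} (g : Matrix.GeneralLinearGroup (Fin 2) ℂ) (v : Blk a b c) :
    Blk a b c :=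
  (fun i => σ19 g (v.1 i),
   fun i j => ∑ m : Fin 2, C ((↑g : Matrix (Fin 2) (Fin 2) ℂ) j m) * σ19 g (v.2.1 i m),
   fun i => C (↑g : Matrix (Fin 2) (Fin 2) ℂ).det * σ19 g (v.2.2 i))

/-- All components of a block element lie in the maximal ideal of the origin. -/
def BlkAtO {a b c : ℕ} (v : Blk a b c) : Prop :=
  (∀ i, constantCoeff (v.1 i) = 0) ∧ (∀ i j, constantCoeff (v.2.1 i j) = 0) ∧
  (∀ i, constantCoeff (v.2.2 i) = 0)

set_option linter.unusedSimpArgs false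

/-! ### A general specialization lemma -/

theorem spec_lemma {τ : Type} (I : Ideal (MvPolynomial τ ℂ)) (x h f : MvPolynomial τ ℂ)
    (mz : (τ → ℂ) → (τ → ℂ)) (hx : x ≠ 0) (hh : h ≠ 0)
    (hxz : ∀ z, eval z x ≠ 0 → eval (mz z) x = eval z x)
    (hI : ∀ z, eval z x ≠ 0 → ∀ w ∈ I, eval (mz z) w = 0)
    (hX : ∀ k, ∃ r : MvPolynomial τ ℂ,
      (∀ z, eval z x ≠ 0 → eval (mz z) r = eval z r) ∧ x * X k - r ∈ I)
    (hf : ∀ z, eval z x ≠ 0 → eval z h ≠ 0 → eval (mz z) f = 0) :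
    ∃ n : ℕ, x ^ n * f ∈ I := by
  have key : ∀ f : MvPolynomial τ ℂ, ∃ (n : ℕ) (r : MvPolynomial τ ℂ),
      (∀ z, eval z x ≠ 0 → eval (mz z) r = eval z r) ∧ x ^ n * f - r ∈ I := by
    intro f
    induction f using MvPolynomial.induction_on with
    | C c => exact ⟨0, C c, fun z _ => by simp, by simp⟩
    | add f g hf hg =>
      obtain ⟨n, r, hr, hn⟩ := hf
      obtain ⟨k, s, hs, hk⟩ := hg
      refine ⟨n + k, x ^ k * r + x ^ n * s, fun z hz => ?_, ?_⟩
      · simp [hr z hz, hs z hz, hxz z hz]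
      · have := I.add_mem (I.mul_mem_left (x ^ k) hn) (I.mul_mem_left (x ^ n) hk)
        convert this using 1
        ring
    | mul_X f k hf =>
      obtain ⟨n, r, hr, hn⟩ := hf
      obtain ⟨s, hs, hk⟩ := hX k
      refine ⟨n + 1, r * s, fun z hz => ?_, ?_⟩
      · simp [hr z hz, hs z hz]
      · have := I.add_mem (I.mul_mem_left (x * X k) hn) (I.mul_mem_left r hk)
        convert this using 1
        ring
  obtain ⟨n, r, hr, hn⟩ := key f
  refine ⟨n, ?_⟩
  have hr0 : x * h * r = 0 := by
    apply MvPolynomial.funext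
    intro z
    by_cases hz : eval z x = 0
    · simp [hz]
    by_cases hz2 : eval z h = 0
    · simp [hz2]
    have h1 := hI z hz _ hn
    simp only [map_sub, map_mul, map_pow, hf z hz hz2, hr z hz] at h1
    have h2 : eval z r = 0 := by linear_combination -h1
    simp [h2]
  have : r = 0 := by
    rcases mul_eq_zero.1 hr0 with h1 | h1
    · exact absurd h1 (mul_ne_zero hx hh)
    · exact h1
  simpa [this] using hn

/-- A substitution fixing every variable modulo `x` has kernel inside `(x)`. -/
theorem dvd_of_subst {τ : Type} (e : MvPolynomial τ ℂ →ₐ[ℂ] MvPolynomial τ ℂ)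
    (x : MvPolynomial τ ℂ) (he : ∀ k, x ∣ e (X k) - X k) (f : MvPolynomial τ ℂ)
    (hf : e f = 0) : x ∣ f := by
  have key : ∀ f : MvPolynomial τ ℂ, x ∣ e f - f := by
    intro f
    induction f using MvPolynomial.induction_on with
    | C c => simp [← MvPolynomial.algebraMap_eq]
    | add f g hf hg =>
      have := dvd_add hf hg
      convert this using 1
      rw [map_add]; ring
    | mul_X f k hf =>
      have := dvd_add (hf.mul_right (e (X k))) ((he k).mul_left f)
      convert this using 1
      rw [map_mul]; ring
  have := key f
  rw [hf, zero_sub, dvd_neg] at this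
  exact this

/-! ### Coordinates -/

def a0 : R19 := X (Sum.inr (Sum.inr (0, 0)))
def b0 : R19 := X (Sum.inr (Sum.inr (0, 1)))
def c0 : R19 := X (Sum.inr (Sum.inr (1, 0)))
def d0 : R19 := X (Sum.inr (Sum.inr (1, 1)))
def al0 : R19 := C (1 / 2) * (X (Sum.inl (0, 0)) - X (Sum.inl (1, 1)))
def be0 : R19 := C (1 / 2) * (X (Sum.inr (Sum.inl (0, 0))) - X (Sum.inr (Sum.inl (1, 1))))
def m0 : R19 := al0 - be0
def n0 : R19 := al0 + be0
def p0 : R19 := X (Sum.inl (0, 1))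
def q0 : R19 := X (Sum.inl (1, 0))
def r0 : R19 := X (Sum.inr (Sum.inl (0, 1)))
def s0 : R19 := X (Sum.inr (Sum.inl (1, 0)))
def t0 : R19 := X (Sum.inl (0, 0)) + X (Sum.inl (1, 1))
  - X (Sum.inr (Sum.inl (0, 0))) - X (Sum.inr (Sum.inl (1, 1)))

def E11 (a b : R19) : R19 := m0 * a + p0 * c0 - s0 * b
def E12 (a b : R19) : R19 := n0 * b + p0 * d0 - r0 * a
def E21 (a : R19) : R19 := q0 * a - n0 * c0 - s0 * d0
def E22 (b : R19) : R19 := q0 * b - m0 * d0 - r0 * c0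
def D0 : R19 := r0 * s0 - m0 * n0 - p0 * q0

def pt (p11 p12 p21 p22 r11 r12 r21 r22 a b c d : ℂ) : Idx19 → ℂ :=
  coords19 (!![p11, p12; p21, p22], !![r11, r12; r21, r22], !![a, b; c, d])

/-- `F₁`-vector is in the image of `F₂`. -/
def IsIm (a b w11 w12 w21 w22 c : R19) : Prop :=
  ∃ v11 v12 v21 v22 e : R19,
    w11 = n0 * v11 + r0 * v21 + q0 * v12 + e * d0 ∧
    w12 = p0 * v11 - m0 * v12 + r0 * v22 - e * b ∧
    w21 = m0 * v21 + s0 * v11 + q0 * v22 - e * c0 ∧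
    w22 = s0 * v12 - n0 * v22 + p0 * v21 + e * a ∧
    c = a * v11 + b * v21 + c0 * v12 + d0 * v22

/-! ### Exactness at `F₂` -/

def mzD (z : Idx19 → ℂ) : Idx19 → ℂ :=
  let α := (z (Sum.inl (0, 0)) - z (Sum.inl (1, 1))) / 2
  let β := (z (Sum.inr (Sum.inl (0, 0))) - z (Sum.inr (Sum.inl (1, 1)))) / 2
  pt (z (Sum.inl (0, 0))) (z (Sum.inl (0, 1)))
    ((z (Sum.inr (Sum.inl (0, 1))) * z (Sum.inr (Sum.inl (1, 0))) - (α - β) * (α + β))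
      / z (Sum.inl (0, 1)))
    (z (Sum.inl (1, 1)))
    (z (Sum.inr (Sum.inl (0, 0)))) (z (Sum.inr (Sum.inl (0, 1))))
    (z (Sum.inr (Sum.inl (1, 0)))) (z (Sum.inr (Sum.inl (1, 1))))
    (z (Sum.inr (Sum.inr (0, 0)))) (z (Sum.inr (Sum.inr (0, 1))))
    (z (Sum.inr (Sum.inr (1, 0)))) (z (Sum.inr (Sum.inr (1, 1))))

/-- substitution killing one variable -/
def kill (k : Idx19) : R19 →ₐ[ℂ] R19 := aeval (fun l => if l = k then 0 else X l)

theorem kill_dvd (k : Idx19) (f : R19) (hf : kill k f = 0) : X k ∣ f := by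
  apply dvd_of_subst (kill k) (X k) _ f hf
  intro l
  by_cases h : l = k
  · subst h; simp [kill]
  · simp [kill, h]

theorem ne_zero_of_eval {f : R19} (z : Idx19 → ℂ) (h : eval z f ≠ 0) : f ≠ 0 := by
  rintro rfl; simp at h

theorem D0_ne : D0 ≠ 0 := by
  apply ne_zero_of_eval (pt 0 0 0 0 0 1 1 0 0 0 0 0)
  simp [D0, m0, n0, al0, be0, p0, q0, r0, s0, pt, coords19]

theorem coprime_D (a b f g : R19) (ha : a = a0 ∨ a = 0) (hb : b = b0 ∨ b = 0)
    (h : E11 a b * f = D0 * g) : D0 ∣ f := by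
  have h1 : ∃ n : ℕ, p0 ^ n * f ∈ Ideal.span {D0} := by
    apply spec_lemma (Ideal.span {D0}) p0 (E11 a b) f mzD
    · apply ne_zero_of_eval (fun _ => 1); simp [p0]
    · apply ne_zero_of_eval (pt 0 1 0 0 0 0 0 0 0 0 1 0)
      rcases ha with rfl | rfl <;> rcases hb with rfl | rfl <;>
      simp [E11, m0, n0, al0, be0, p0, q0, r0, s0, c0, pt, coords19, a0, b0]
    · intro z hz
      simp [mzD, p0, pt, coords19]
    · intro z hz w hw
      obtain ⟨u, rfl⟩ := Ideal.mem_span_singleton.1 hw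
      rw [map_mul]
      have hz' : z (Sum.inl (0, 1)) ≠ 0 := by simpa [p0] using hz
      have : eval (mzD z) D0 = 0 := by
        simp [D0, m0, n0, al0, be0, p0, q0, r0, s0, pt, coords19, mzD]
        field_simp
        ring
      rw [this, zero_mul]
    · rintro k
      by_cases hk : k = Sum.inl (1, 0)
      · subst hk
        refine ⟨p0 * q0 + D0, fun z hz => ?_, ?_⟩
        · have hz' : z (Sum.inl (0, 1)) ≠ 0 := by simpa [p0] using hz
          simp [D0, m0, n0, al0, be0, p0, q0, r0, s0, pt, coords19, mzD]
        · rw [Ideal.mem_span_singleton]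
          exact ⟨-1, by simp [q0]⟩
      · refine ⟨p0 * X k, fun z hz => ?_, by simp⟩
        rcases k with ⟨i, j⟩ | ⟨i, j⟩ | ⟨i, j⟩ <;> fin_cases i <;> fin_cases j <;>
          simp [p0, pt, coords19, mzD] at hk ⊢
    · intro z hz hz2
      have hz' : z (Sum.inl (0, 1)) ≠ 0 := by simpa [p0] using hz
      have hD : eval (mzD z) D0 = 0 := by
        simp [D0, m0, n0, al0, be0, p0, q0, r0, s0, pt, coords19, mzD]
        field_simp
        ring
      have hE : eval (mzD z) (E11 a b) = eval z (E11 a b) := by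
        rcases ha with rfl | rfl <;> rcases hb with rfl | rfl <;>
        simp [E11, m0, n0, al0, be0, p0, q0, r0, s0, c0, pt, coords19, a0, b0, mzD]
      have := congrArg (eval (mzD z)) h
      rw [map_mul, map_mul, hD, zero_mul, hE] at this
      exact (mul_eq_zero.1 this).resolve_left hz2
  obtain ⟨n, hn⟩ := h1
  induction n with
  | zero => simpa [Ideal.mem_span_singleton] using hn
  | succ n ih =>
    apply ih
    rw [Ideal.mem_span_singleton] at hn ⊢
    obtain ⟨u, hu⟩ := hn
    have h2 := congrArg (kill (Sum.inl (0, 1))) hu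
    have h3 : kill (Sum.inl (0, 1)) p0 = 0 := by simp [kill, p0]
    have h4 : kill (Sum.inl (0, 1)) D0 ≠ 0 := by
      apply ne_zero_of_eval (pt 0 0 0 0 0 1 1 0 0 0 0 0)
      simp [kill, D0, m0, n0, al0, be0, p0, q0, r0, s0, pt, coords19]
    rw [pow_succ', map_mul, map_mul, map_mul, h3, zero_mul, zero_mul] at h2
    obtain ⟨u', rfl⟩ := kill_dvd _ _ ((mul_eq_zero.1 h2.symm).resolve_left h4)
    refine ⟨u', ?_⟩
    have hp : p0 ≠ 0 := by
      apply ne_zero_of_eval (fun _ => 1); simp [p0]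
    apply mul_left_cancel₀ hp
    change _ = D0 * (p0 * u') at hu
    linear_combination hu

theorem H2 (a b v11 v12 v21 v22 e : R19) (ha : a = a0 ∨ a = 0) (hb : b = b0 ∨ b = 0)
    (h1 : n0 * v11 + r0 * v21 + q0 * v12 + e * d0 = 0)
    (h2 : p0 * v11 - m0 * v12 + r0 * v22 - e * b = 0)
    (h3 : m0 * v21 + s0 * v11 + q0 * v22 - e * c0 = 0)
    (h4 : s0 * v12 - n0 * v22 + p0 * v21 + e * a = 0) :
    ∃ u, v11 = u * E22 b ∧ v12 = -(u * E12 a b) ∧ v21 = -(u * E21 a) ∧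
      v22 = u * E11 a b ∧ e = -(u * D0) := by
  have k11 : D0 * v11 + e * E22 b = 0 := by
    simp only [D0, E22]; linear_combination -m0 * h1 + r0 * h3 - q0 * h2
  have k12 : D0 * v12 - e * E12 a b = 0 := by
    simp only [D0, E12]; linear_combination n0 * h2 + r0 * h4 - p0 * h1
  have k21 : D0 * v21 - e * E21 a = 0 := by
    simp only [D0, E21]; linear_combination s0 * h1 - n0 * h3 - q0 * h4
  have k22 : D0 * v22 + e * E11 a b = 0 := by
    simp only [D0, E11]; linear_combination s0 * h2 + m0 * h4 - p0 * h3
  obtain ⟨u, rfl⟩ := coprime_D a b e (-v22) ha hb (by linear_combination k22)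
  refine ⟨-u, ?_, ?_, ?_, ?_, by ring⟩ <;> apply mul_left_cancel₀ D0_ne
  · linear_combination k11
  · linear_combination k12
  · linear_combination k21
  · linear_combination k22

/-! ### Exactness at `F₁` -/

theorem a0_ne : a0 ≠ 0 := by
  apply ne_zero_of_eval (fun _ => 1); simp [a0]

theorem b0_ne : b0 ≠ 0 := by
  apply ne_zero_of_eval (fun _ => 1); simp [b0]

theorem t0_ne : t0 ≠ 0 := by
  apply ne_zero_of_eval (pt 1 0 0 0 0 0 0 0 0 0 0 0); simp [t0, pt, coords19]

/-- make `E12` vanish by moving `r` -/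
def mzR (b : R19) (z : Idx19 → ℂ) : Idx19 → ℂ :=
  pt (z (Sum.inl (0, 0))) (z (Sum.inl (0, 1))) (z (Sum.inl (1, 0))) (z (Sum.inl (1, 1)))
    (z (Sum.inr (Sum.inl (0, 0)))) ((eval z n0 * eval z b + eval z p0 * eval z d0) / eval z a0)
    (z (Sum.inr (Sum.inl (1, 0)))) (z (Sum.inr (Sum.inl (1, 1))))
    (z (Sum.inr (Sum.inr (0, 0)))) (z (Sum.inr (Sum.inr (0, 1))))
    (z (Sum.inr (Sum.inr (1, 0)))) (z (Sum.inr (Sum.inr (1, 1))))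

/-- make `E12` and `E21` vanish by moving `r` and `q` -/
def mzRQ (b : R19) (z : Idx19 → ℂ) : Idx19 → ℂ :=
  pt (z (Sum.inl (0, 0))) (z (Sum.inl (0, 1)))
    ((eval z n0 * eval z c0 + eval z s0 * eval z d0) / eval z a0) (z (Sum.inl (1, 1)))
    (z (Sum.inr (Sum.inl (0, 0)))) ((eval z n0 * eval z b + eval z p0 * eval z d0) / eval z a0)
    (z (Sum.inr (Sum.inl (1, 0)))) (z (Sum.inr (Sum.inl (1, 1))))
    (z (Sum.inr (Sum.inr (0, 0)))) (z (Sum.inr (Sum.inr (0, 1))))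
    (z (Sum.inr (Sum.inr (1, 0)))) (z (Sum.inr (Sum.inr (1, 1))))

theorem koszul1 (b f g : R19) (hb : b = b0 ∨ b = 0)
    (h : E21 a0 * f = E12 a0 b * g) : ∃ n : ℕ, E12 a0 b ∣ a0 ^ n * f := by
  have hE12 : ∀ z, eval z a0 ≠ 0 → eval (mzR b z) (E12 a0 b) = 0 := by
    intro z hz
    have hz' : z (Sum.inr (Sum.inr (0, 0))) ≠ 0 := by simpa [a0] using hz
    rcases hb with rfl | rfl <;>
    · simp [E12, n0, al0, be0, p0, r0, d0, pt, coords19, a0, b0, mzR]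
      field_simp
      ring
  have h1 : ∃ n : ℕ, a0 ^ n * f ∈ Ideal.span {E12 a0 b} := by
    apply spec_lemma (Ideal.span {E12 a0 b}) a0 (E21 a0) f (mzR b)
    · exact a0_ne
    · apply ne_zero_of_eval (pt 0 0 0 0 0 0 1 0 0 0 0 1)
      simp [E21, n0, al0, be0, q0, s0, c0, d0, pt, coords19, a0]
    · intro z hz
      simp [mzR, a0, pt, coords19]
    · intro z hz w hw
      obtain ⟨u, rfl⟩ := Ideal.mem_span_singleton.1 hw
      rw [map_mul, hE12 z hz, zero_mul]
    · rintro k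
      by_cases hk : k = Sum.inr (Sum.inl (0, 1))
      · subst hk
        refine ⟨a0 * r0 + E12 a0 b, fun z hz => ?_, ?_⟩
        · have hz' : z (Sum.inr (Sum.inr (0, 0))) ≠ 0 := by simpa [a0] using hz
          rcases hb with rfl | rfl <;>
          · simp [E12, n0, al0, be0, p0, r0, d0, pt, coords19, a0, b0, mzR]
            field_simp
            try ring
        · rw [Ideal.mem_span_singleton]
          exact ⟨-1, by simp [r0]⟩
      · refine ⟨a0 * X k, fun z hz => ?_, by simp⟩
        rcases k with ⟨i, j⟩ | ⟨i, j⟩ | ⟨i, j⟩ <;> fin_cases i <;> fin_cases j <;>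
          simp [a0, pt, coords19, mzR] at hk ⊢
    · intro z hz hz2
      have hE : eval (mzR b z) (E21 a0) = eval z (E21 a0) := by
        simp [E21, n0, al0, be0, q0, s0, c0, d0, pt, coords19, a0, mzR]
      have := congrArg (eval (mzR b z)) h
      rw [map_mul, map_mul, hE12 z hz, zero_mul, hE] at this
      exact (mul_eq_zero.1 this).resolve_left hz2
  obtain ⟨n, hn⟩ := h1
  exact ⟨n, Ideal.mem_span_singleton.1 hn⟩

theorem koszul2 (b f g k : R19) (hb : b = b0 ∨ b = 0)
    (h : E11 a0 b * f + E12 a0 b * g + E21 a0 * k = 0) :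
    ∃ (n : ℕ) (u v : R19), a0 ^ n * f = u * E12 a0 b + v * E21 a0 := by
  have hE12 : ∀ z, eval z a0 ≠ 0 → eval (mzRQ b z) (E12 a0 b) = 0 := by
    intro z hz
    have hz' : z (Sum.inr (Sum.inr (0, 0))) ≠ 0 := by simpa [a0] using hz
    rcases hb with rfl | rfl <;>
    · simp [E12, n0, al0, be0, p0, r0, d0, pt, coords19, a0, b0, mzRQ]
      field_simp
      ring
  have hE21 : ∀ z, eval z a0 ≠ 0 → eval (mzRQ b z) (E21 a0) = 0 := by
    intro z hz
    have hz' : z (Sum.inr (Sum.inr (0, 0))) ≠ 0 := by simpa [a0] using hz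
    simp [E21, n0, al0, be0, q0, s0, c0, d0, pt, coords19, a0, mzRQ]
    field_simp
    ring
  have h1 : ∃ n : ℕ, a0 ^ n * f ∈ Ideal.span {E12 a0 b, E21 a0} := by
    apply spec_lemma (Ideal.span {E12 a0 b, E21 a0}) a0 (E11 a0 b) f (mzRQ b)
    · exact a0_ne
    · apply ne_zero_of_eval (pt 0 1 0 0 0 0 0 0 0 0 1 0)
      rcases hb with rfl | rfl <;>
      simp [E11, m0, al0, be0, p0, s0, c0, pt, coords19, a0, b0]
    · intro z hz
      simp [mzRQ, a0, pt, coords19]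
    · intro z hz w hw
      obtain ⟨u, v, rfl⟩ := Ideal.mem_span_pair.1 hw
      rw [map_add, map_mul, map_mul, hE12 z hz, hE21 z hz, mul_zero, mul_zero, add_zero]
    · rintro k
      by_cases hk : k = Sum.inr (Sum.inl (0, 1))
      · subst hk
        refine ⟨a0 * r0 + E12 a0 b, fun z hz => ?_, ?_⟩
        · have hz' : z (Sum.inr (Sum.inr (0, 0))) ≠ 0 := by simpa [a0] using hz
          rcases hb with rfl | rfl <;>
          · simp [E12, n0, al0, be0, p0, r0, d0, pt, coords19, a0, b0, mzRQ]
            field_simp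
            try ring
        · rw [Ideal.mem_span_pair]
          exact ⟨-1, 0, by simp [r0]⟩
      by_cases hk2 : k = Sum.inl (1, 0)
      · subst hk2
        refine ⟨a0 * q0 - E21 a0, fun z hz => ?_, ?_⟩
        · have hz' : z (Sum.inr (Sum.inr (0, 0))) ≠ 0 := by simpa [a0] using hz
          simp [E21, n0, al0, be0, q0, s0, c0, d0, pt, coords19, a0, mzRQ]
          field_simp
          try ring
        · rw [Ideal.mem_span_pair]
          exact ⟨0, 1, by simp [q0]⟩
      · refine ⟨a0 * X k, fun z hz => ?_, by simp⟩
        rcases k with ⟨i, j⟩ | ⟨i, j⟩ | ⟨i, j⟩ <;> fin_cases i <;> fin_cases j <;>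
          simp [a0, pt, coords19, mzRQ] at hk hk2 ⊢
    · intro z hz hz2
      have hE : eval (mzRQ b z) (E11 a0 b) = eval z (E11 a0 b) := by
        rcases hb with rfl | rfl <;>
        simp [E11, m0, al0, be0, p0, s0, c0, pt, coords19, a0, b0, mzRQ]
      have := congrArg (eval (mzRQ b z)) h
      rw [map_add, map_add, map_mul, map_mul, map_mul, hE12 z hz, hE21 z hz, zero_mul, zero_mul,
        hE, add_zero, add_zero, map_zero] at this
      exact (mul_eq_zero.1 this).resolve_left hz2
  obtain ⟨n, hn⟩ := h1
  obtain ⟨u, v, huv⟩ := Ideal.mem_span_pair.1 hn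
  exact ⟨n, u, v, huv.symm⟩

theorem H1_loc (b w11 w12 w21 w22 c : R19) (hb : b = b0 ∨ b = 0)
    (h : E11 a0 b * w11 + E12 a0 b * w21 + E21 a0 * w12 + E22 b * w22 + D0 * c = 0) :
    ∃ n : ℕ, IsIm a0 b (a0 ^ n * w11) (a0 ^ n * w12) (a0 ^ n * w21) (a0 ^ n * w22)
      (a0 ^ n * c) := by
  obtain ⟨x11, hx11⟩ : ∃ x, x = a0 * w11 - n0 * c - d0 * w22 := ⟨_, rfl⟩
  obtain ⟨x12, hx12⟩ : ∃ x, x = a0 * w12 - p0 * c + b * w22 := ⟨_, rfl⟩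
  obtain ⟨x21, hx21⟩ : ∃ x, x = a0 * w21 - s0 * c + c0 * w22 := ⟨_, rfl⟩
  have h1 : E11 a0 b * x11 + E12 a0 b * x21 + E21 a0 * x12 = 0 := by
    have : a0 * (E11 a0 b * w11 + E12 a0 b * w21 + E21 a0 * w12 + E22 b * w22 + D0 * c) = 0 := by
      rw [h, mul_zero]
    rw [hx11, hx12, hx21]
    simp only [E11, E12, E21, E22, D0] at this ⊢
    linear_combination this
  obtain ⟨n, u, v, hn⟩ := koszul2 b _ _ _ hb h1
  have hE12 : E12 a0 b ≠ 0 := by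
    apply ne_zero_of_eval (pt 0 0 0 0 0 1 0 0 1 0 0 0)
    rcases hb with rfl | rfl <;>
    simp [E12, n0, al0, be0, p0, r0, d0, pt, coords19, a0, b0]
  have hE21 : E21 a0 ≠ 0 := by
    apply ne_zero_of_eval (pt 0 0 0 0 0 0 1 0 0 0 0 1)
    simp [E21, n0, al0, be0, q0, s0, c0, d0, pt, coords19, a0]
  have h2 : E21 a0 * (a0 ^ n * x12 + v * E11 a0 b) =
      E12 a0 b * (-(a0 ^ n * x21 + u * E11 a0 b)) := by
    linear_combination a0 ^ n * h1 - E11 a0 b * hn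
  obtain ⟨k, γ, hk⟩ := koszul1 b _ _ hb h2
  have h3 : a0 ^ k * (a0 ^ n * x21 + u * E11 a0 b) = -γ * E21 a0 := by
    apply mul_left_cancel₀ hE12
    linear_combination a0 ^ k * h2 - E21 a0 * hk
  refine ⟨k + n + 1,
    a0 ^ (k + n) * c + a0 ^ k * u * b - a0 ^ k * v * c0 + γ * d0,
    a0 ^ k * v * a0, -(a0 ^ k * u * a0), -γ * a0,
    a0 ^ (k + n) * w22 + a0 ^ k * u * p0 - a0 ^ k * v * s0 - γ * n0, ?_, ?_, ?_, ?_, ?_⟩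
  · have e1 : a0 ^ (k + n + 1) * w11 = a0 ^ k * (a0 ^ n * x11) + a0 ^ (k + n) * (n0 * c + d0 * w22) := by
      rw [hx11]; ring
    rw [e1, hn]; simp only [E11, E12, E21]; ring
  · have e1 : a0 ^ (k + n + 1) * w12 = a0 ^ k * (a0 ^ n * x12 + v * E11 a0 b) - a0 ^ k * v * E11 a0 b
        + a0 ^ (k + n) * (p0 * c - b * w22) := by
      rw [hx12]; ring
    rw [e1, hk]; simp only [E11, E12, E21]; ring
  · have e1 : a0 ^ (k + n + 1) * w21 = a0 ^ k * (a0 ^ n * x21 + u * E11 a0 b) - a0 ^ k * u * E11 a0 b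
        + a0 ^ (k + n) * (s0 * c - c0 * w22) := by
      rw [hx21]; ring
    rw [e1, h3]; simp only [E11, E12, E21]; ring
  · ring
  · ring

/-- cancelling `a0`. -/
theorem IsIm_cancel (b w11 w12 w21 w22 c : R19) (hb : b = b0 ∨ b = 0)
    (h : IsIm a0 b (a0 * w11) (a0 * w12) (a0 * w21) (a0 * w22) (a0 * c)) :
    IsIm a0 b w11 w12 w21 w22 c := by
  obtain ⟨v11, v12, v21, v22, e, h1, h2, h3, h4, h5⟩ := h
  set κ := kill (Sum.inr (Sum.inr (0, 0))) with hκ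
  have ka : κ a0 = 0 := by simp [hκ, kill, a0]
  have kb : κ b = b := by rcases hb with rfl | rfl <;> simp [hκ, kill, b0]
  have kc : κ c0 = c0 := by simp [hκ, kill, c0]
  have kd : κ d0 = d0 := by simp [hκ, kill, d0]
  have km : κ m0 = m0 := by simp [hκ, kill, m0, al0, be0, ← MvPolynomial.algebraMap_eq]
  have kn : κ n0 = n0 := by simp [hκ, kill, n0, al0, be0, ← MvPolynomial.algebraMap_eq]
  have kp : κ p0 = p0 := by simp [hκ, kill, p0]
  have kq : κ q0 = q0 := by simp [hκ, kill, q0]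
  have kr : κ r0 = r0 := by simp [hκ, kill, r0]
  have ks : κ s0 = s0 := by simp [hκ, kill, s0]
  have g1 := congrArg κ h1
  have g2 := congrArg κ h2
  have g3 := congrArg κ h3
  have g4 := congrArg κ h4
  simp only [map_add, map_sub, map_mul, ka, kb, kc, kd, km, kn, kp, kq, kr, ks, zero_mul]
    at g1 g2 g3 g4
  obtain ⟨u, u11, u12, u21, u22, ue⟩ := H2 0 b _ _ _ _ _ (Or.inr rfl) hb g1.symm g2.symm g3.symm
    (by linear_combination -g4)
  have idem : ∀ f, κ (κ f) = κ f := by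
    intro f
    have : (κ.comp κ) = κ := by
      ext l
      by_cases hl : l = Sum.inr (Sum.inr (0, 0))
      · simp [hκ, kill, hl]
      · simp [hκ, kill, hl]
    exact DFunLike.congr_fun this f
  have dv : ∀ v P Q : R19, κ P = Q → κ Q = Q → κ v = u * Q → ∃ v', v = u * P + a0 * v' := by
    intro v P Q hP hQ hv
    have : κ (v - u * P) = 0 := by
      have h' := congrArg κ hv
      rw [idem, map_mul, hQ, hv] at h'
      rw [map_sub, map_mul, hP, hv, h', sub_self]
    obtain ⟨v', hv'⟩ := kill_dvd _ _ this
    exact ⟨v', by change _ = a0 * v' at hv'; linear_combination hv'⟩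
  obtain ⟨y11, rfl⟩ := dv v11 (E22 b) (E22 b)
    (by simp only [E22, map_sub, map_mul, kb, kc, kd, km, kq, kr])
    (by simp only [E22, map_sub, map_mul, kb, kc, kd, km, kq, kr]) u11
  obtain ⟨y12, rfl⟩ := dv v12 (-E12 a0 b) (-E12 0 b)
    (by simp only [E12, map_neg, map_add, map_sub, map_mul, ka, kb, kd, kn, kp, kr])
    (by simp only [E12, map_neg, map_add, map_sub, map_mul, map_zero, kb, kd, kn, kp, kr])
    (by rw [u12]; ring)
  obtain ⟨y21, rfl⟩ := dv v21 (-E21 a0) (-E21 0)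
    (by simp only [E21, map_neg, map_sub, map_mul, ka, kc, kd, kn, kq, ks])
    (by simp only [E21, map_neg, map_sub, map_mul, map_zero, kc, kd, kn, kq, ks])
    (by rw [u21]; ring)
  obtain ⟨y22, rfl⟩ := dv v22 (E11 a0 b) (E11 0 b)
    (by simp only [E11, map_add, map_sub, map_mul, ka, kb, kc, km, kp, ks])
    (by simp only [E11, map_add, map_sub, map_mul, map_zero, kb, kc, km, kp, ks])
    u22
  obtain ⟨ye, rfl⟩ := dv e (-D0) (-D0)
    (by simp only [D0, map_neg, map_sub, map_mul, km, kn, kp, kq, kr, ks])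
    (by simp only [D0, map_neg, map_sub, map_mul, km, kn, kp, kq, kr, ks])
    (by rw [ue]; ring)
  refine ⟨y11, y12, y21, y22, ye, ?_, ?_, ?_, ?_, ?_⟩ <;> apply mul_left_cancel₀ a0_ne
  · rw [h1]; simp only [E11, E12, E21, E22, D0]; ring
  · rw [h2]; simp only [E11, E12, E21, E22, D0]; ring
  · rw [h3]; simp only [E11, E12, E21, E22, D0]; ring
  · rw [h4]; simp only [E11, E12, E21, E22, D0]; ring
  · rw [h5]; simp only [E11, E12, E21, E22]; ring

theorem H1 (b w11 w12 w21 w22 c : R19) (hb : b = b0 ∨ b = 0)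
    (h : E11 a0 b * w11 + E12 a0 b * w21 + E21 a0 * w12 + E22 b * w22 + D0 * c = 0) :
    IsIm a0 b w11 w12 w21 w22 c := by
  obtain ⟨n, hn⟩ := H1_loc b w11 w12 w21 w22 c hb h
  induction n with
  | zero => simpa using hn
  | succ n ih =>
    apply ih
    apply IsIm_cancel b _ _ _ _ _ hb
    simpa only [pow_succ', mul_assoc] using hn

/-! ### The ideal: `b0` and `t0` are non-zero-divisors -/

def InI (f : R19) : Prop := ∃ w11 w12 w21 w22 c : R19,
  f = E11 a0 b0 * w11 + E12 a0 b0 * w21 + E21 a0 * w12 + E22 b0 * w22 + D0 * c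

theorem InI_cancel_b (f : R19) (h : InI (b0 * f)) : InI f := by
  obtain ⟨w11, w12, w21, w22, c, h⟩ := h
  set κ := kill (Sum.inr (Sum.inr (0, 1))) with hκ
  have kb : κ b0 = 0 := by simp [hκ, kill, b0]
  have ka : κ a0 = a0 := by simp [hκ, kill, a0]
  have kc : κ c0 = c0 := by simp [hκ, kill, c0]
  have kd : κ d0 = d0 := by simp [hκ, kill, d0]
  have km : κ m0 = m0 := by simp [hκ, kill, m0, al0, be0, ← MvPolynomial.algebraMap_eq]
  have kn : κ n0 = n0 := by simp [hκ, kill, n0, al0, be0, ← MvPolynomial.algebraMap_eq]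
  have kp : κ p0 = p0 := by simp [hκ, kill, p0]
  have kq : κ q0 = q0 := by simp [hκ, kill, q0]
  have kr : κ r0 = r0 := by simp [hκ, kill, r0]
  have ks : κ s0 = s0 := by simp [hκ, kill, s0]
  have idem : ∀ f, κ (κ f) = κ f := by
    intro f
    have : (κ.comp κ) = κ := by
      ext l
      by_cases hl : l = Sum.inr (Sum.inr (0, 1))
      · simp [hκ, kill, hl]
      · simp [hκ, kill, hl]
    exact DFunLike.congr_fun this f
  have g := congrArg κ h
  simp only [E11, E12, E21, E22, D0, map_add, map_sub, map_mul, ka, kb, kc, kd, km, kn, kp, kq,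
    kr, ks] at g
  obtain ⟨v11, v12, v21, v22, e, h1, h2, h3, h4, h5⟩ :=
    H1 0 (κ w11) (κ w12) (κ w21) (κ w22) (κ c) (Or.inr rfl)
    (by simp only [E11, E12, E21, E22, D0]; linear_combination -g)
  have dv : ∀ w P : R19, κ (w - P) = 0 → ∃ w', w = P + b0 * w' := by
    intro w P hP
    obtain ⟨v', hv'⟩ := kill_dvd _ _ hP
    exact ⟨v', by change _ = b0 * v' at hv'; linear_combination hv'⟩
  have g1 := congrArg κ h1
  have g2 := congrArg κ h2
  have g3 := congrArg κ h3
  have g4 := congrArg κ h4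
  have g5 := congrArg κ h5
  simp only [idem, map_add, map_sub, map_mul, ka, map_zero, kc, kd, km, kn, kp, kq, kr, ks]
    at g1 g2 g3 g4 g5
  obtain ⟨y11, e1⟩ := dv w11 (n0 * v11 + r0 * v21 + q0 * v12 + e * d0) (by
    simp only [map_add, map_sub, map_mul, ka, kb, kc, kd, km, kn, kp, kq, kr, ks, g1]; ring)
  obtain ⟨y12, e2⟩ := dv w12 (p0 * v11 - m0 * v12 + r0 * v22 - e * b0) (by
    simp only [map_add, map_sub, map_mul, ka, kb, kc, kd, km, kn, kp, kq, kr, ks, g2]; ring)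
  obtain ⟨y21, e3⟩ := dv w21 (m0 * v21 + s0 * v11 + q0 * v22 - e * c0) (by
    simp only [map_add, map_sub, map_mul, ka, kb, kc, kd, km, kn, kp, kq, kr, ks, g3]; ring)
  obtain ⟨y22, e4⟩ := dv w22 (s0 * v12 - n0 * v22 + p0 * v21 + e * a0) (by
    simp only [map_add, map_sub, map_mul, ka, kb, kc, kd, km, kn, kp, kq, kr, ks, g4]; ring)
  obtain ⟨y5, e5⟩ := dv c (a0 * v11 + b0 * v21 + c0 * v12 + d0 * v22) (by
    simp only [map_add, map_sub, map_mul, ka, kb, kc, kd, km, kn, kp, kq, kr, ks, g5]; ring)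
  refine ⟨y11, y12, y21, y22, y5, ?_⟩
  apply mul_left_cancel₀ b0_ne
  rw [h, e1, e2, e3, e4, e5]
  simp only [E11, E12, E21, E22, D0]
  ring

/-- substitution making the traces equal -/
def et : R19 →ₐ[ℂ] R19 := aeval (Sum.elim
  (fun ij => X (Sum.inl ij) - if ij.1 = ij.2 then C (1 / 4) * t0 else 0)
  (Sum.elim (fun ij => X (Sum.inr (Sum.inl ij)) + if ij.1 = ij.2 then C (1 / 4) * t0 else 0)
    (fun ij => X (Sum.inr (Sum.inr ij)))))

theorem et_dvd (f : R19) (hf : et f = 0) : t0 ∣ f := by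
  apply dvd_of_subst et t0 _ f hf
  rintro (⟨i, j⟩ | ⟨i, j⟩ | ⟨i, j⟩) <;> by_cases h : i = j <;> simp [et, h]

theorem et_a : et a0 = a0 := by simp [et, a0]
theorem et_b : et b0 = b0 := by simp [et, b0]
theorem et_c : et c0 = c0 := by simp [et, c0]
theorem et_d : et d0 = d0 := by simp [et, d0]
theorem et_p : et p0 = p0 := by simp [et, p0]
theorem et_q : et q0 = q0 := by simp [et, q0]
theorem et_r : et r0 = r0 := by simp [et, r0]
theorem et_s : et s0 = s0 := by simp [et, s0]
theorem et_C (z : ℂ) : et (C z) = C z := by simp [et, ← MvPolynomial.algebraMap_eq]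
theorem et_al : et al0 = al0 := by
  rw [al0, map_mul, et_C]; simp [et]
theorem et_be : et be0 = be0 := by
  rw [be0, map_mul, et_C]; simp [et]
theorem et_m : et m0 = m0 := by rw [m0, map_sub, et_al, et_be]
theorem et_n : et n0 = n0 := by rw [n0, map_add, et_al, et_be]
theorem et_t : et t0 = 0 := by
  have : (C (1 / 4) : R19) * 4 = 1 := by
    rw [show (4 : R19) = C 4 from rfl, ← C_mul]; norm_num
  rw [show et t0 = t0 - C (1 / 4) * 4 * t0 by
    conv_lhs => rw [t0]
    conv_rhs => rw [t0]
    simp [et]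
    rw [t0]
    ring]
  rw [this]; ring

theorem et_idem (f : R19) : et (et f) = et f := by
  have : et.comp et = et := by
    ext l
    rcases l with ⟨i, j⟩ | ⟨i, j⟩ | ⟨i, j⟩
    · have : et (X (Sum.inl (i, j))) = X (Sum.inl (i, j)) - if i = j then C (1 / 4) * t0 else 0 := by
        simp [et]
      rw [AlgHom.comp_apply, this, map_sub, this]
      split_ifs <;> simp [et_t]
    · have : et (X (Sum.inr (Sum.inl (i, j)))) = X (Sum.inr (Sum.inl (i, j)))
          + if i = j then C (1 / 4) * t0 else 0 := by
        simp [et]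
      rw [AlgHom.comp_apply, this, map_add, this]
      split_ifs <;> simp [et_t]
    · simp [et]
  exact DFunLike.congr_fun this f

/-- lifting through `t0` -/
theorem et_lift (w P : R19) (hP : et w = et P) : ∃ w', w = P + t0 * w' := by
  obtain ⟨v', hv'⟩ := et_dvd (w - P) (by rw [map_sub, hP, sub_self])
  exact ⟨v', by linear_combination hv'⟩

/-- the key step for exactness at the first spot of the total complex -/
theorem T1 (x w11 w12 w21 w22 c : R19)
    (h : t0 * x + (E11 a0 b0 * w11 + E12 a0 b0 * w21 + E21 a0 * w12 + E22 b0 * w22 + D0 * c) = 0) :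
    ∃ v11 v12 v21 v22 e y11 y12 y21 y22 y : R19,
    w11 = n0 * v11 + r0 * v21 + q0 * v12 + e * d0 + t0 * y11 ∧
    w12 = p0 * v11 - m0 * v12 + r0 * v22 - e * b0 + t0 * y12 ∧
    w21 = m0 * v21 + s0 * v11 + q0 * v22 - e * c0 + t0 * y21 ∧
    w22 = s0 * v12 - n0 * v22 + p0 * v21 + e * a0 + t0 * y22 ∧
    c = a0 * v11 + b0 * v21 + c0 * v12 + d0 * v22 + t0 * y ∧
    x = -(E11 a0 b0 * y11 + E12 a0 b0 * y21 + E21 a0 * y12 + E22 b0 * y22 + D0 * y) := by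
  have g := congrArg et h
  simp only [E11, E12, E21, E22, D0, map_add, map_sub, map_mul, et_a, et_b, et_c, et_d, et_m, et_n,
    et_p, et_q, et_r, et_s, et_t, map_zero] at g
  obtain ⟨v11, v12, v21, v22, e, h1, h2, h3, h4, h5⟩ :=
    H1 b0 (et w11) (et w12) (et w21) (et w22) (et c) (Or.inl rfl)
    (by simp only [E11, E12, E21, E22, D0]; linear_combination g)
  have g1 := congrArg et h1
  have g2 := congrArg et h2
  have g3 := congrArg et h3
  have g4 := congrArg et h4
  have g5 := congrArg et h5
  rw [et_idem] at g1 g2 g3 g4 g5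
  obtain ⟨y11, e1⟩ := et_lift _ _ g1
  obtain ⟨y12, e2⟩ := et_lift _ _ g2
  obtain ⟨y21, e3⟩ := et_lift _ _ g3
  obtain ⟨y22, e4⟩ := et_lift _ _ g4
  obtain ⟨y, e5⟩ := et_lift _ _ g5
  refine ⟨v11, v12, v21, v22, e, y11, y12, y21, y22, y, e1, e2, e3, e4, e5, ?_⟩
  apply mul_left_cancel₀ t0_ne
  rw [e1, e2, e3, e4, e5] at h
  simp only [E11, E12, E21, E22, D0] at h ⊢
  linear_combination h

/-! ### The differentials -/

def D1 : Blk 2 2 0 →ₗ[R19] R19 where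
  toFun v := t0 * v.1 0 + (E11 a0 b0 * v.2.1 0 0 + E12 a0 b0 * v.2.1 0 1
    + E21 a0 * v.2.1 1 0 + E22 b0 * v.2.1 1 1 + D0 * v.1 1)
  map_add' v w := by
    simp only [Prod.fst_add, Prod.snd_add, Pi.add_apply]; ring
  map_smul' x v := by
    simp only [Prod.smul_fst, Prod.smul_snd, Pi.smul_apply, smul_eq_mul, RingHom.id_apply]; ring

/-- copies 0,1 are `V` (in `F₂`), copies 2,3 are `W` (in `F₁`). -/
def D2 : Blk 1 4 1 →ₗ[R19] Blk 2 2 0 where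
  toFun v :=
    (![-(E11 a0 b0 * v.2.1 2 0 + E12 a0 b0 * v.2.1 2 1
          + E21 a0 * v.2.1 3 0 + E22 b0 * v.2.1 3 1 + D0 * v.1 0),
       a0 * v.2.1 0 0 + b0 * v.2.1 0 1 + c0 * v.2.1 1 0 + d0 * v.2.1 1 1 + t0 * v.1 0],
     ![![n0 * v.2.1 0 0 + r0 * v.2.1 0 1 + q0 * v.2.1 1 0 + v.2.2 0 * d0 + t0 * v.2.1 2 0,
         m0 * v.2.1 0 1 + s0 * v.2.1 0 0 + q0 * v.2.1 1 1 - v.2.2 0 * c0 + t0 * v.2.1 2 1],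
       ![p0 * v.2.1 0 0 - m0 * v.2.1 1 0 + r0 * v.2.1 1 1 - v.2.2 0 * b0 + t0 * v.2.1 3 0,
         s0 * v.2.1 1 0 - n0 * v.2.1 1 1 + p0 * v.2.1 0 1 + v.2.2 0 * a0 + t0 * v.2.1 3 1]],
     ![])
  map_add' v w := by
    refine Prod.ext ?_ (Prod.ext ?_ ?_)
    · funext i; fin_cases i <;> simp <;> ring
    · funext i j; fin_cases i <;> fin_cases j <;> simp <;> ring
    · funext i; exact i.elim0
  map_smul' x v := by
    refine Prod.ext ?_ (Prod.ext ?_ ?_)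
    · funext i; fin_cases i <;> simp <;> ring
    · funext i j; fin_cases i <;> fin_cases j <;> simp <;> ring
    · funext i; exact i.elim0

def D3 : Blk 0 2 2 →ₗ[R19] Blk 1 4 1 where
  toFun v :=
    (![-(a0 * v.2.1 0 0 + b0 * v.2.1 0 1 + c0 * v.2.1 1 0 + d0 * v.2.1 1 1)],
     ![![v.2.2 0 * E22 b0 + t0 * v.2.1 0 0, -(v.2.2 0 * E21 a0) + t0 * v.2.1 0 1],
       ![-(v.2.2 0 * E12 a0 b0) + t0 * v.2.1 1 0, v.2.2 0 * E11 a0 b0 + t0 * v.2.1 1 1],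
       ![-(n0 * v.2.1 0 0 + r0 * v.2.1 0 1 + q0 * v.2.1 1 0 + v.2.2 1 * d0),
         -(m0 * v.2.1 0 1 + s0 * v.2.1 0 0 + q0 * v.2.1 1 1 - v.2.2 1 * c0)],
       ![-(p0 * v.2.1 0 0 - m0 * v.2.1 1 0 + r0 * v.2.1 1 1 - v.2.2 1 * b0),
         -(s0 * v.2.1 1 0 - n0 * v.2.1 1 1 + p0 * v.2.1 0 1 + v.2.2 1 * a0)]],
     ![-(v.2.2 0 * D0) + t0 * v.2.2 1])
  map_add' v w := by
    refine Prod.ext ?_ (Prod.ext ?_ ?_)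
    · funext i; fin_cases i; simp; ring
    · funext i j; fin_cases i <;> fin_cases j <;> simp <;> ring
    · funext i; fin_cases i; simp; ring
  map_smul' x v := by
    refine Prod.ext ?_ (Prod.ext ?_ ?_)
    · funext i; fin_cases i; simp; ring
    · funext i j; fin_cases i <;> fin_cases j <;> simp <;> ring
    · funext i; fin_cases i; simp; ring

def D4 : Blk 0 0 1 →ₗ[R19] Blk 0 2 2 where
  toFun v :=
    (![],
     ![![-(v.2.2 0 * E22 b0), v.2.2 0 * E21 a0],
       ![v.2.2 0 * E12 a0 b0, -(v.2.2 0 * E11 a0 b0)]],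
     ![t0 * v.2.2 0, v.2.2 0 * D0])
  map_add' v w := by
    refine Prod.ext ?_ (Prod.ext ?_ ?_)
    · funext i; exact i.elim0
    · funext i j; fin_cases i <;> fin_cases j <;> simp <;> ring
    · funext i; fin_cases i <;> simp <;> ring
  map_smul' x v := by
    refine Prod.ext ?_ (Prod.ext ?_ ?_)
    · funext i; exact i.elim0
    · funext i j; fin_cases i <;> fin_cases j <;> simp <;> ring
    · funext i; fin_cases i <;> simp <;> ring

/-! ### Exactness of the total complex -/

theorem D4_inj : Function.Injective D4 := by
  rw [injective_iff_map_eq_zero]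
  intro v hv
  have h := congrFun (congrArg (fun w => w.2.2) hv) 0
  simp [D4, t0_ne] at h
  refine Prod.ext ?_ (Prod.ext ?_ ?_)
  · funext i; exact i.elim0
  · funext i; exact i.elim0
  · funext i; fin_cases i; simpa using h

theorem D34 : Function.Exact D4 D3 := by
  intro v
  constructor
  · intro hv
    obtain ⟨x, V, k⟩ := v
    have e0 := congrFun (congrFun (congrArg (fun w => w.2.1) hv) 2) 0
    have e1 := congrFun (congrFun (congrArg (fun w => w.2.1) hv) 2) 1
    have e2 := congrFun (congrFun (congrArg (fun w => w.2.1) hv) 3) 0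
    have e3 := congrFun (congrFun (congrArg (fun w => w.2.1) hv) 3) 1
    have f := congrFun (congrArg (fun w => w.2.2) hv) 0
    simp [D3] at e0 e1 e2 e3 f
    obtain ⟨u, h11, h12, h21, h22, he⟩ := H2 a0 b0 (V 0 0) (V 1 0) (V 0 1) (V 1 1) (k 1)
      (Or.inl rfl) (Or.inl rfl) (by linear_combination -e0) (by linear_combination -e2)
      (by linear_combination -e1) (by linear_combination -e3)
    have hk : k 0 = t0 * (-u) := by
      apply mul_left_cancel₀ D0_ne
      rw [he] at f
      linear_combination -f
    refine ⟨(![], ![], ![-u]), ?_⟩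
    refine Prod.ext ?_ (Prod.ext ?_ ?_)
    · funext i; exact i.elim0
    · funext i j; fin_cases i <;> fin_cases j <;> simp [D4, h11, h12, h21, h22]
    · funext i; fin_cases i <;> simp [D4, hk, he]
  · rintro ⟨w, rfl⟩
    refine Prod.ext ?_ (Prod.ext ?_ ?_)
    · funext i; fin_cases i; simp [D3, D4, E11, E12, E21, E22]; ring
    · funext i j
      fin_cases i <;> fin_cases j <;> simp [D3, D4, E11, E12, E21, E22, D0] <;> ring
    · funext i; fin_cases i; simp [D3, D4]; ring

theorem D23 : Function.Exact D3 D2 := by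
  intro v
  constructor
  · intro hv
    obtain ⟨x, V, k⟩ := v
    have g0 := congrFun (congrArg (fun w => w.1) hv) 0
    have g1 := congrFun (congrArg (fun w => w.1) hv) 1
    have e0 := congrFun (congrFun (congrArg (fun w => w.2.1) hv) 0) 0
    have e1 := congrFun (congrFun (congrArg (fun w => w.2.1) hv) 0) 1
    have e2 := congrFun (congrFun (congrArg (fun w => w.2.1) hv) 1) 0
    have e3 := congrFun (congrFun (congrArg (fun w => w.2.1) hv) 1) 1
    simp [D2] at g0 g1 e0 e1 e2 e3
    obtain ⟨y11, y12, y21, y22, e, h1, h2, h3, h4, h5⟩ :=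
      H1 b0 (-V 2 0) (-V 3 0) (-V 2 1) (-V 3 1) (-x 0) (Or.inl rfl) (by linear_combination g0)
    obtain ⟨u, h11, h12, h21, h22, he⟩ := H2 a0 b0 (V 0 0 - t0 * y11) (V 1 0 - t0 * y12)
      (V 0 1 - t0 * y21) (V 1 1 - t0 * y22) (k 0 - t0 * e)
      (Or.inl rfl) (Or.inl rfl)
      (by linear_combination e0 + t0 * h1) (by linear_combination e2 + t0 * h2)
      (by linear_combination e1 + t0 * h3) (by linear_combination e3 + t0 * h4)
    refine ⟨(![], ![![y11, y21], ![y12, y22]], ![u, e]), ?_⟩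
    refine Prod.ext ?_ (Prod.ext ?_ ?_)
    · funext i; fin_cases i
      simp [D3]; linear_combination h5
    · funext i j; fin_cases i <;> fin_cases j <;> simp [D3]
      · linear_combination -h11
      · linear_combination -h21
      · linear_combination -h12
      · linear_combination -h22
      · linear_combination h1
      · linear_combination h3
      · linear_combination h2
      · linear_combination h4
    · funext i; fin_cases i
      simp [D3]; linear_combination -he
  · rintro ⟨w, rfl⟩
    refine Prod.ext ?_ (Prod.ext ?_ ?_)
    · funext i; fin_cases i <;> simp [D2, D3, E11, E12, E21, E22, D0] <;> ring
    · funext i j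
      fin_cases i <;> fin_cases j <;> simp [D2, D3, E11, E12, E21, E22, D0] <;> ring
    · funext i; exact i.elim0

theorem D12 : Function.Exact D2 D1 := by
  intro v
  constructor
  · intro hv
    obtain ⟨x, W, k⟩ := v
    simp only [D1, LinearMap.coe_mk, AddHom.coe_mk] at hv
    obtain ⟨v11, v12, v21, v22, e, y11, y12, y21, y22, y, h1, h2, h3, h4, h5, h6⟩ :=
      T1 (x 0) (W 0 0) (W 1 0) (W 0 1) (W 1 1) (x 1) (by linear_combination hv)
    refine ⟨(![y], ![![v11, v21], ![v12, v22], ![y11, y21], ![y12, y22]], ![e]), ?_⟩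
    refine Prod.ext ?_ (Prod.ext ?_ ?_)
    · funext i; fin_cases i <;> simp [D2]
      · linear_combination -h6
      · linear_combination -h5
    · funext i j; fin_cases i <;> fin_cases j <;> simp [D2]
      · linear_combination -h1
      · linear_combination -h3
      · linear_combination -h2
      · linear_combination -h4
    · funext i; exact i.elim0
  · rintro ⟨w, rfl⟩
    simp [D1, D2, E11, E12, E21, E22, D0]; ring

/-! ### The image of `D1` is the vanishing ideal -/

theorem range_vanish (t : Pt19) (ht : t ∈ C19) (v : Blk 2 2 0) :
    eval (coords19 t) (D1 v) = 0 := by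
  obtain ⟨P, Q, A⟩ := t
  obtain ⟨h1, h2, h3⟩ := ht
  have e00 := congrFun (congrFun h1 0) 0
  have e01 := congrFun (congrFun h1 0) 1
  have e10 := congrFun (congrFun h1 1) 0
  have e11 := congrFun (congrFun h1 1) 1
  simp [Matrix.mul_apply, Fin.sum_univ_two] at e00 e01 e10 e11
  rw [Matrix.det_fin_two, Matrix.det_fin_two] at h2
  rw [Matrix.trace_fin_two, Matrix.trace_fin_two] at h3
  simp only at h2 h3
  have k1 : eval (coords19 (P, Q, A)) t0 = 0 := by
    simp [t0, coords19]; linear_combination h3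
  have k2 : eval (coords19 (P, Q, A)) (E11 a0 b0) = 0 := by
    simp [E11, m0, al0, be0, p0, s0, c0, a0, b0, coords19]
    linear_combination -e00 - A 0 0 * h3 / 2
  have k3 : eval (coords19 (P, Q, A)) (E12 a0 b0) = 0 := by
    simp [E12, n0, al0, be0, p0, r0, d0, a0, b0, coords19]
    linear_combination -e01 - A 0 1 * h3 / 2
  have k4 : eval (coords19 (P, Q, A)) (E21 a0) = 0 := by
    simp [E21, n0, al0, be0, q0, s0, c0, d0, a0, coords19]
    linear_combination -e10 - A 1 0 * h3 / 2
  have k5 : eval (coords19 (P, Q, A)) (E22 b0) = 0 := by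
    simp [E22, m0, al0, be0, q0, r0, c0, d0, b0, coords19]
    linear_combination -e11 - A 1 1 * h3 / 2
  have k6 : eval (coords19 (P, Q, A)) D0 = 0 := by
    simp [D0, m0, n0, al0, be0, p0, q0, r0, s0, coords19]
    linear_combination h2 - (P 0 0 + P 1 1 + Q 0 0 + Q 1 1) * h3 / 4
  simp [D1, k1, k2, k3, k4, k5, k6]

def mzJ (z : Idx19 → ℂ) : Idx19 → ℂ :=
  let σ := z (Sum.inl (0, 0)) + z (Sum.inl (1, 1))
  let m := (z (Sum.inl (0, 0)) - z (Sum.inl (1, 1))) / 2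
    - (z (Sum.inr (Sum.inl (0, 0))) - z (Sum.inr (Sum.inl (1, 1)))) / 2
  let p := z (Sum.inl (0, 1))
  let r := z (Sum.inr (Sum.inl (0, 1)))
  let a := z (Sum.inr (Sum.inr (0, 0)))
  let b := z (Sum.inr (Sum.inr (0, 1)))
  let c := z (Sum.inr (Sum.inr (1, 0)))
  let d := z (Sum.inr (Sum.inr (1, 1)))
  let n := (r * a - p * d) / b
  pt (σ / 2 + (m + n) / 2) p ((m * d + r * c) / b) (σ / 2 - (m + n) / 2)
    (σ / 2 + (n - m) / 2) r ((m * a + p * c) / b) (σ / 2 - (n - m) / 2) a b c d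

theorem mzJ_mem (z : Idx19 → ℂ) (hz : z (Sum.inr (Sum.inr (0, 1))) ≠ 0) :
    ∃ t ∈ C19, mzJ z = coords19 t := by
  refine ⟨_, ?_, rfl⟩
  refine ⟨?_, ?_, ?_⟩
  · ext i j
    fin_cases i <;> fin_cases j <;> simp [Matrix.mul_apply, Fin.sum_univ_two] <;> field_simp <;>
      ring
  · simp [Matrix.det_fin_two]; field_simp; ring
  · simp [Matrix.trace_fin_two]

theorem cancel_b_range (f : R19) (h : b0 * f ∈ LinearMap.range D1) :
    f ∈ LinearMap.range D1 := by
  obtain ⟨v, hv⟩ := h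
  have g := congrArg et hv
  simp only [D1, LinearMap.coe_mk, AddHom.coe_mk, E11, E12, E21, E22, D0, map_add, map_sub,
    map_mul, et_a, et_b, et_c, et_d, et_m, et_n, et_p, et_q, et_r, et_s, et_t] at g
  obtain ⟨w11, w12, w21, w22, c, h1⟩ := InI_cancel_b (et f)
    ⟨et (v.2.1 0 0), et (v.2.1 1 0), et (v.2.1 0 1), et (v.2.1 1 1), et (v.1 1), by
      simp only [E11, E12, E21, E22, D0]; linear_combination -g⟩
  obtain ⟨y, hy⟩ := et_lift f (et f) (et_idem f).symm
  refine ⟨(![y, c], ![![w11, w21], ![w12, w22]], ![]), ?_⟩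
  rw [hy, h1]
  simp [D1]
  ring

theorem spec_J (f : R19) (hf : f ∈ J19) : ∃ n : ℕ, b0 ^ n * f ∈ LinearMap.range D1 := by
  apply spec_lemma (LinearMap.range D1) b0 1 f mzJ b0_ne one_ne_zero
  · intro z hz; simp [b0, mzJ, pt, coords19]
  · rintro z hz w ⟨v, rfl⟩
    obtain ⟨t, ht, h⟩ := mzJ_mem z (by simpa [b0] using hz)
    rw [h]
    exact range_vanish t ht v
  · have mem : ∀ x w11 w12 w21 w22 c : R19, t0 * x + (E11 a0 b0 * w11 + E12 a0 b0 * w21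
        + E21 a0 * w12 + E22 b0 * w22 + D0 * c) ∈ LinearMap.range D1 :=
      fun x w11 w12 w21 w22 c => ⟨(![x, c], ![![w11, w21], ![w12, w22]], ![]), by simp [D1]⟩
    intro k
    rcases k with ⟨i, j⟩ | ⟨i, j⟩ | ⟨i, j⟩ <;> fin_cases i <;> fin_cases j
    · refine ⟨b0 * X (Sum.inl (0, 0)) - (C (1 / 2) * E12 a0 b0), fun z hz => ?_, ?_⟩
      · have hz' : z (Sum.inr (Sum.inr (0, 1))) ≠ 0 := by simpa [b0] using hz
        simp [E11, E12, E22, t0, m0, n0, al0, be0, p0, q0, r0, s0, a0, b0, c0, d0, mzJ, pt,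
          coords19]
        field_simp
        ring
      · refine Eq.subst (motive := (· ∈ _)) (sub_sub_cancel _ _).symm ?_
        convert mem 0 0 0 (C (1 / 2)) 0 0 using 1
        ring
    · exact ⟨b0 * p0, fun z hz => by simp [b0, p0, mzJ, pt, coords19], by simp [p0]⟩
    · refine ⟨b0 * X (Sum.inl (1, 0)) - (E22 b0), fun z hz => ?_, ?_⟩
      · have hz' : z (Sum.inr (Sum.inr (0, 1))) ≠ 0 := by simpa [b0] using hz
        simp [E11, E12, E22, t0, m0, n0, al0, be0, p0, q0, r0, s0, a0, b0, c0, d0, mzJ, pt,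
          coords19]
        field_simp
        ring
      · refine Eq.subst (motive := (· ∈ _)) (sub_sub_cancel _ _).symm ?_
        convert mem 0 0 0 0 1 0 using 1
        ring
    · refine ⟨b0 * X (Sum.inl (1, 1)) - (-(C (1 / 2) * E12 a0 b0)), fun z hz => ?_, ?_⟩
      · have hz' : z (Sum.inr (Sum.inr (0, 1))) ≠ 0 := by simpa [b0] using hz
        simp [E11, E12, E22, t0, m0, n0, al0, be0, p0, q0, r0, s0, a0, b0, c0, d0, mzJ, pt,
          coords19]
        field_simp
        ring
      · refine Eq.subst (motive := (· ∈ _)) (sub_sub_cancel _ _).symm ?_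
        convert mem 0 0 0 (-C (1 / 2)) 0 0 using 1
        ring
    · refine ⟨b0 * X (Sum.inr (Sum.inl (0, 0))) - (C (1 / 2) * E12 a0 b0 - C (1 / 2) * b0 * t0), fun z hz => ?_, ?_⟩
      · have hz' : z (Sum.inr (Sum.inr (0, 1))) ≠ 0 := by simpa [b0] using hz
        simp [E11, E12, E22, t0, m0, n0, al0, be0, p0, q0, r0, s0, a0, b0, c0, d0, mzJ, pt,
          coords19]
        field_simp
        ring
      · refine Eq.subst (motive := (· ∈ _)) (sub_sub_cancel _ _).symm ?_
        convert mem (-C (1 / 2) * b0) 0 0 (C (1 / 2)) 0 0 using 1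
        ring
    · exact ⟨b0 * r0, fun z hz => by simp [b0, r0, mzJ, pt, coords19], by simp [r0]⟩
    · refine ⟨b0 * X (Sum.inr (Sum.inl (1, 0))) - (-E11 a0 b0), fun z hz => ?_, ?_⟩
      · have hz' : z (Sum.inr (Sum.inr (0, 1))) ≠ 0 := by simpa [b0] using hz
        simp [E11, E12, E22, t0, m0, n0, al0, be0, p0, q0, r0, s0, a0, b0, c0, d0, mzJ, pt,
          coords19]
        field_simp
        ring
      · refine Eq.subst (motive := (· ∈ _)) (sub_sub_cancel _ _).symm ?_
        convert mem 0 (-1) 0 0 0 0 using 1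
        ring
    · refine ⟨b0 * X (Sum.inr (Sum.inl (1, 1))) - (-(C (1 / 2) * E12 a0 b0) - C (1 / 2) * b0 * t0), fun z hz => ?_, ?_⟩
      · have hz' : z (Sum.inr (Sum.inr (0, 1))) ≠ 0 := by simpa [b0] using hz
        simp [E11, E12, E22, t0, m0, n0, al0, be0, p0, q0, r0, s0, a0, b0, c0, d0, mzJ, pt,
          coords19]
        field_simp
        ring
      · refine Eq.subst (motive := (· ∈ _)) (sub_sub_cancel _ _).symm ?_
        convert mem (-C (1 / 2) * b0) 0 0 (-C (1 / 2)) 0 0 using 1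
        ring
    · exact ⟨b0 * a0, fun z hz => by simp [b0, a0, mzJ, pt, coords19], by simp [a0]⟩
    · exact ⟨b0 * b0, fun z hz => by simp [b0, mzJ, pt, coords19], by simp [b0]⟩
    · exact ⟨b0 * c0, fun z hz => by simp [b0, c0, mzJ, pt, coords19], by simp [c0]⟩
    · exact ⟨b0 * d0, fun z hz => by simp [b0, d0, mzJ, pt, coords19], by simp [d0]⟩
  · intro z hz _
    obtain ⟨t, ht, h⟩ := mzJ_mem z (by simpa [b0] using hz)
    rw [h]
    exact hf t ht

theorem range_D1 : LinearMap.range D1 = J19 := by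
  apply le_antisymm
  · rintro _ ⟨v, rfl⟩ t ht
    exact range_vanish t ht v
  · intro f hf
    obtain ⟨n, hn⟩ := spec_J f hf
    induction n with
    | zero => simpa using hn
    | succ n ih =>
      apply ih
      apply cancel_b_range
      rwa [← mul_assoc, ← pow_succ']

/-! ### Equivariance -/

section equivariance

variable (g : Matrix.GeneralLinearGroup (Fin 2) ℂ)

/-- entries of `g` as constants of `R19` -/
def Gc (i j : Fin 2) : R19 := C ((↑g : Matrix (Fin 2) (Fin 2) ℂ) i j)

def Ic : R19 := C ((↑g : Matrix (Fin 2) (Fin 2) ℂ).det)⁻¹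

theorem Ic_rel : (Gc g 0 0 * Gc g 1 1 - Gc g 0 1 * Gc g 1 0) * Ic g = 1 := by
  have h : (↑g : Matrix (Fin 2) (Fin 2) ℂ).det ≠ 0 := g.det_ne_zero
  rw [Gc, Gc, Gc, Gc, Ic, ← C_mul, ← C_mul, ← C_sub, ← C_mul, ← Matrix.det_fin_two,
    mul_inv_cancel₀ h, C_1]

theorem C_det : (C (↑g : Matrix (Fin 2) (Fin 2) ℂ).det : R19)
    = Gc g 0 0 * Gc g 1 1 - Gc g 0 1 * Gc g 1 0 := by
  rw [Matrix.det_fin_two]; simp [Gc]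

theorem σ_C (z : ℂ) : σ19 g (C z) = C z := by simp [σ19, ← MvPolynomial.algebraMap_eq]

theorem C_Gc (i j : Fin 2) : (C ((↑g : Matrix (Fin 2) (Fin 2) ℂ) i j) : R19) = Gc g i j := rfl

theorem inv_coe : (↑g : Matrix (Fin 2) (Fin 2) ℂ)⁻¹ =
    (↑g : Matrix (Fin 2) (Fin 2) ℂ).det⁻¹ • (↑g : Matrix (Fin 2) (Fin 2) ℂ).adjugate := by
  rw [Matrix.inv_def, Ring.inverse_eq_inv']

theorem σ_a : σ19 g a0 = a0 * Gc g 0 0 + b0 * Gc g 1 0 := by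
  simp [σ19, a0, b0, Gc, Fin.sum_univ_two]; ring
theorem σ_b : σ19 g b0 = a0 * Gc g 0 1 + b0 * Gc g 1 1 := by
  simp [σ19, a0, b0, Gc, Fin.sum_univ_two]; ring
theorem σ_c : σ19 g c0 = c0 * Gc g 0 0 + d0 * Gc g 1 0 := by
  simp [σ19, c0, d0, Gc, Fin.sum_univ_two]; ring
theorem σ_d : σ19 g d0 = c0 * Gc g 0 1 + d0 * Gc g 1 1 := by
  simp [σ19, c0, d0, Gc, Fin.sum_univ_two]; ring
theorem σ_p : σ19 g p0 = p0 := by simp [σ19, p0]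
theorem σ_q : σ19 g q0 = q0 := by simp [σ19, q0]
theorem σ_al : σ19 g al0 = al0 := by
  rw [al0, map_mul, σ_C]; simp [σ19]

/-- image of the entries of `p₂` -/
theorem σ_r11 : σ19 g (X (Sum.inr (Sum.inl (0, 0)))) = Ic g *
    (Gc g 1 1 * Gc g 0 0 * X (Sum.inr (Sum.inl (0, 0))) + Gc g 1 1 * Gc g 1 0 * r0
      - Gc g 0 1 * Gc g 0 0 * s0 - Gc g 0 1 * Gc g 1 0 * X (Sum.inr (Sum.inl (1, 1)))) := by
  simp [σ19, r0, s0, Gc, Ic, Fin.sum_univ_two, inv_coe, Matrix.adjugate_fin_two]; ring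
theorem σ_r22 : σ19 g (X (Sum.inr (Sum.inl (1, 1)))) = Ic g *
    (-Gc g 1 0 * Gc g 0 1 * X (Sum.inr (Sum.inl (0, 0))) - Gc g 1 0 * Gc g 1 1 * r0
      + Gc g 0 0 * Gc g 0 1 * s0 + Gc g 0 0 * Gc g 1 1 * X (Sum.inr (Sum.inl (1, 1)))) := by
  simp [σ19, r0, s0, Gc, Ic, Fin.sum_univ_two, inv_coe, Matrix.adjugate_fin_two]; ring
theorem two_be : be0 * 2 = X (Sum.inr (Sum.inl (0, 0))) - X (Sum.inr (Sum.inl (1, 1))) := by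
  have e2 : (C (1 / 2) : R19) * 2 = 1 := by
    rw [show (2 : R19) = C 2 from rfl, ← C_mul]; norm_num
  rw [be0]
  linear_combination (X (Sum.inr (Sum.inl (0, 0))) - X (Sum.inr (Sum.inl (1, 1)))) * e2
theorem σ_r : σ19 g r0 = Ic g * (2 * Gc g 0 1 * Gc g 1 1 * be0 + Gc g 1 1 * Gc g 1 1 * r0
      - Gc g 0 1 * Gc g 0 1 * s0) := by
  have := two_be
  have h : σ19 g r0 = Ic g * (Gc g 0 1 * Gc g 1 1 * (X (Sum.inr (Sum.inl (0, 0))) -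
      X (Sum.inr (Sum.inl (1, 1)))) + Gc g 1 1 * Gc g 1 1 * r0
      - Gc g 0 1 * Gc g 0 1 * s0) := by
    simp [σ19, r0, s0, Gc, Ic, Fin.sum_univ_two, inv_coe, Matrix.adjugate_fin_two]; ring
  rw [h, ← this]; ring
theorem σ_s : σ19 g s0 = Ic g * (-2 * Gc g 0 0 * Gc g 1 0 * be0 + Gc g 0 0 * Gc g 0 0 * s0
      - Gc g 1 0 * Gc g 1 0 * r0) := by
  have := two_be
  have h : σ19 g s0 = Ic g * (-Gc g 0 0 * Gc g 1 0 * (X (Sum.inr (Sum.inl (0, 0))) -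
      X (Sum.inr (Sum.inl (1, 1)))) + Gc g 0 0 * Gc g 0 0 * s0
      - Gc g 1 0 * Gc g 1 0 * r0) := by
    simp [σ19, r0, s0, Gc, Ic, Fin.sum_univ_two, inv_coe, Matrix.adjugate_fin_two]; ring
  rw [h, ← this]; ring
theorem σ_be : σ19 g be0 = Ic g * ((Gc g 0 0 * Gc g 1 1 + Gc g 0 1 * Gc g 1 0) * be0
      + Gc g 1 1 * Gc g 1 0 * r0 - Gc g 0 1 * Gc g 0 0 * s0) := by
  have e2 : (C (1 / 2) : R19) * 2 = 1 := by
    rw [show (2 : R19) = C 2 from rfl, ← C_mul]; norm_num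
  rw [show σ19 g be0 = C (1 / 2) * (σ19 g (X (Sum.inr (Sum.inl (0, 0))))
    - σ19 g (X (Sum.inr (Sum.inl (1, 1))))) by rw [be0, map_mul, map_sub, σ_C], σ_r11, σ_r22]
  rw [be0]
  linear_combination Ic g * (Gc g 1 1 * Gc g 1 0 * r0 - Gc g 0 1 * Gc g 0 0 * s0) * e2
theorem σ_t : σ19 g t0 = t0 := by
  have h1 : σ19 g (X (Sum.inl (0, 0))) = X (Sum.inl (0, 0)) := by simp [σ19]
  have h2 : σ19 g (X (Sum.inl (1, 1))) = X (Sum.inl (1, 1)) := by simp [σ19]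
  rw [t0, map_sub, map_sub, map_add, h1, h2, σ_r11, σ_r22]
  linear_combination -(X (Sum.inr (Sum.inl (0, 0))) + X (Sum.inr (Sum.inl (1, 1)))) * Ic_rel g

/-- `g · σ(q₂) = q₂ · g`, entrywise -/
theorem gq11 : Gc g 0 0 * σ19 g be0 + Gc g 0 1 * σ19 g s0 = be0 * Gc g 0 0 + r0 * Gc g 1 0 := by
  rw [σ_be, σ_s]
  linear_combination (be0 * Gc g 0 0 + r0 * Gc g 1 0) * Ic_rel g
theorem gq12 : Gc g 0 0 * σ19 g r0 - Gc g 0 1 * σ19 g be0 = be0 * Gc g 0 1 + r0 * Gc g 1 1 := by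
  rw [σ_be, σ_r]
  linear_combination (be0 * Gc g 0 1 + r0 * Gc g 1 1) * Ic_rel g
theorem gq21 : Gc g 1 0 * σ19 g be0 + Gc g 1 1 * σ19 g s0 = s0 * Gc g 0 0 - be0 * Gc g 1 0 := by
  rw [σ_be, σ_s]
  linear_combination (s0 * Gc g 0 0 - be0 * Gc g 1 0) * Ic_rel g
theorem gq22 : Gc g 1 0 * σ19 g r0 - Gc g 1 1 * σ19 g be0 = s0 * Gc g 0 1 - be0 * Gc g 1 1 := by
  rw [σ_be, σ_r]
  linear_combination (s0 * Gc g 0 1 - be0 * Gc g 1 1) * Ic_rel g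

theorem σ_E11 : σ19 g (E11 a0 b0) = E11 a0 b0 * Gc g 0 0 + E12 a0 b0 * Gc g 1 0 := by
  simp only [E11, E12, m0, n0, map_add, map_sub, map_mul, σ_a, σ_b, σ_c, σ_p, σ_al]
  linear_combination -a0 * gq11 g - b0 * gq21 g
theorem σ_E12 : σ19 g (E12 a0 b0) = E11 a0 b0 * Gc g 0 1 + E12 a0 b0 * Gc g 1 1 := by
  simp only [E11, E12, m0, n0, map_add, map_sub, map_mul, σ_a, σ_b, σ_d, σ_p, σ_al]
  linear_combination -a0 * gq12 g - b0 * gq22 g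
theorem σ_E21 : σ19 g (E21 a0) = E21 a0 * Gc g 0 0 + E22 b0 * Gc g 1 0 := by
  simp only [E21, E22, m0, n0, map_add, map_sub, map_mul, σ_a, σ_c, σ_d, σ_q, σ_al]
  linear_combination -c0 * gq11 g - d0 * gq21 g
theorem σ_E22 : σ19 g (E22 b0) = E21 a0 * Gc g 0 1 + E22 b0 * Gc g 1 1 := by
  simp only [E21, E22, m0, n0, map_add, map_sub, map_mul, σ_b, σ_c, σ_d, σ_q, σ_al]
  linear_combination -c0 * gq12 g - d0 * gq22 g
theorem σ_D : σ19 g D0 = D0 := by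
  have h : σ19 g be0 * σ19 g be0 + σ19 g r0 * σ19 g s0 = be0 * be0 + r0 * s0 := by
    have hI := Ic_rel g
    rw [σ_be, σ_r, σ_s]
    linear_combination (be0 * be0 + r0 * s0) *
      ((Gc g 0 0 * Gc g 1 1 - Gc g 0 1 * Gc g 1 0) * Ic g + 1) * hI
  simp only [D0, m0, n0, map_add, map_sub, map_mul, σ_p, σ_q, σ_al]
  linear_combination h

theorem D1_equiv (v : Blk 2 2 0) : D1 (actBlk g v) = σ19 g (D1 v) := by
  simp only [D1, actBlk, LinearMap.coe_mk, AddHom.coe_mk, Fin.sum_univ_two, map_add, map_mul,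
    σ_E11, σ_E12, σ_E21, σ_E22, σ_D, σ_t]
  simp only [C_Gc]
  ring

theorem D4_equiv (v : Blk 0 0 1) : D4 (actBlk g v) = actBlk g (D4 v) := by
  refine Prod.ext ?_ (Prod.ext ?_ ?_)
  · funext i; exact i.elim0
  · funext i j
    fin_cases i <;> fin_cases j <;>
      simp [D4, actBlk, Fin.sum_univ_two, σ_E11, σ_E12, σ_E21, σ_E22, C_det] <;>
      simp only [C_Gc] <;> ring
  · funext i
    fin_cases i <;>
      simp [D4, actBlk, σ_D, σ_t] <;> ring

theorem D3_equiv (v : Blk 0 2 2) : D3 (actBlk g v) = actBlk g (D3 v) := by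
  obtain ⟨x, V, k⟩ := v
  refine Prod.ext ?_ (Prod.ext ?_ ?_)
  · funext i
    fin_cases i
    simp [D3, actBlk, Fin.sum_univ_two, σ_a, σ_b, σ_c, σ_d]
    simp only [C_Gc]
    ring
  · funext i j
    fin_cases i <;> fin_cases j <;>
      simp [D3, actBlk, Fin.sum_univ_two, σ_E11, σ_E12, σ_E21, σ_E22, σ_t, C_det,
        σ_a, σ_b, σ_c, σ_d, σ_p, σ_q, σ_al, m0, n0] <;>
      simp only [C_Gc]
    · ring
    · ring
    · ring
    · ring
    · linear_combination σ19 g (V 0 0) * gq11 g + σ19 g (V 0 1) * gq12 g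
    · linear_combination σ19 g (V 0 0) * gq21 g + σ19 g (V 0 1) * gq22 g
    · linear_combination σ19 g (V 1 0) * gq11 g + σ19 g (V 1 1) * gq12 g
    · linear_combination σ19 g (V 1 0) * gq21 g + σ19 g (V 1 1) * gq22 g
  · funext i
    fin_cases i
    simp [D3, actBlk, σ_D, σ_t]
    ring

theorem D2_equiv (v : Blk 1 4 1) : D2 (actBlk g v) = actBlk g (D2 v) := by
  obtain ⟨x, V, k⟩ := v
  refine Prod.ext ?_ (Prod.ext ?_ ?_)
  · funext i
    fin_cases i <;>
    simp [D2, actBlk, Fin.sum_univ_two, σ_a, σ_b, σ_c, σ_d, σ_t, σ_E11, σ_E12, σ_E21, σ_E22,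
      σ_D] <;>
    simp only [C_Gc] <;>
    ring
  · funext i j
    fin_cases i <;> fin_cases j <;>
      simp [D2, actBlk, Fin.sum_univ_two, σ_t, C_det,
        σ_a, σ_b, σ_c, σ_d, σ_p, σ_q, σ_al, m0, n0] <;>
      simp only [C_Gc]
    · linear_combination -σ19 g (V 0 0) * gq11 g - σ19 g (V 0 1) * gq12 g
    · linear_combination -σ19 g (V 0 0) * gq21 g - σ19 g (V 0 1) * gq22 g
    · linear_combination -σ19 g (V 1 0) * gq11 g - σ19 g (V 1 1) * gq12 g
    · linear_combination -σ19 g (V 1 0) * gq21 g - σ19 g (V 1 1) * gq22 g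
  · funext i; exact i.elim0

end equivariance

/-! ### Minimality -/

theorem cc_a : constantCoeff a0 = 0 := by simp [a0]
theorem cc_b : constantCoeff b0 = 0 := by simp [b0]
theorem cc_c : constantCoeff c0 = 0 := by simp [c0]
theorem cc_d : constantCoeff d0 = 0 := by simp [d0]
theorem cc_m : constantCoeff m0 = 0 := by simp [m0, al0, be0]
theorem cc_n : constantCoeff n0 = 0 := by simp [n0, al0, be0]
theorem cc_p : constantCoeff p0 = 0 := by simp [p0]
theorem cc_q : constantCoeff q0 = 0 := by simp [q0]
theorem cc_r : constantCoeff r0 = 0 := by simp [r0]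
theorem cc_s : constantCoeff s0 = 0 := by simp [s0]
theorem cc_t : constantCoeff t0 = 0 := by simp [t0]
theorem cc_E11 : constantCoeff (E11 a0 b0) = 0 := by simp [E11, cc_m, cc_p, cc_s]
theorem cc_E12 : constantCoeff (E12 a0 b0) = 0 := by simp [E12, cc_n, cc_p, cc_r]
theorem cc_E21 : constantCoeff (E21 a0) = 0 := by simp [E21, cc_n, cc_q, cc_s]
theorem cc_E22 : constantCoeff (E22 b0) = 0 := by simp [E22, cc_m, cc_q, cc_r]
theorem cc_D : constantCoeff D0 = 0 := by simp [D0, cc_m, cc_p, cc_r]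

theorem D1_min (v : Blk 2 2 0) : constantCoeff (D1 v) = 0 := by
  simp [D1, cc_E11, cc_E12, cc_E21, cc_E22, cc_D, cc_t]

theorem D2_min (v : Blk 1 4 1) : BlkAtO (D2 v) := by
  refine ⟨?_, ?_, fun i => i.elim0⟩
  · intro i
    fin_cases i <;> simp [D2, cc_E11, cc_E12, cc_E21, cc_E22, cc_D, cc_t, cc_a, cc_b, cc_c, cc_d]
  · intro i j
    fin_cases i <;> fin_cases j <;>
      simp [D2, cc_t, cc_a, cc_b, cc_c, cc_d, cc_m, cc_n, cc_p, cc_q, cc_r, cc_s]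

theorem D3_min (v : Blk 0 2 2) : BlkAtO (D3 v) := by
  refine ⟨?_, ?_, ?_⟩
  · intro i
    fin_cases i; simp [D3, cc_a, cc_b, cc_c, cc_d]
  · intro i j
    fin_cases i <;> fin_cases j <;>
      simp [D3, cc_t, cc_a, cc_b, cc_c, cc_d, cc_m, cc_n, cc_p, cc_q, cc_r, cc_s,
        cc_E11, cc_E12, cc_E21, cc_E22]
  · intro i
    fin_cases i; simp [D3, cc_D, cc_t]

theorem D4_min (v : Blk 0 0 1) : BlkAtO (D4 v) := by
  refine ⟨fun i => i.elim0, ?_, ?_⟩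
  · intro i j
    fin_cases i <;> fin_cases j <;> simp [D4, cc_E11, cc_E12, cc_E21, cc_E22]
  · intro i
    fin_cases i <;> simp [D4, cc_D, cc_t]

/-- `O_C` has a finite `GL(S₂)`-equivariant minimal free resolution whose
terms are direct sums of copies of the trivial representation `ℂ`, `S₂` and `det S₂`
only (and `S₂` and `det S₂` do occur); hence the Tor groups of `O_C` at the origin,
as `GL(S₂)`-representations, involve only the irreducibles `ℂ`, `S₂` and `det S₂`. -/
theorem stmt19 :
    ∃ (a₁ b₁ c₁ a₂ b₂ c₂ a₃ b₃ c₃ a₄ b₄ c₄ : ℕ)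
      (d₁ : Blk a₁ b₁ c₁ →ₗ[R19] R19)
      (d₂ : Blk a₂ b₂ c₂ →ₗ[R19] Blk a₁ b₁ c₁)
      (d₃ : Blk a₃ b₃ c₃ →ₗ[R19] Blk a₂ b₂ c₂)
      (d₄ : Blk a₄ b₄ c₄ →ₗ[R19] Blk a₃ b₃ c₃),
      Function.Injective d₄ ∧
      Function.Exact d₄ d₃ ∧ Function.Exact d₃ d₂ ∧ Function.Exact d₂ d₁ ∧
      LinearMap.range d₁ = J19 ∧
      -- equivariance
      (∀ g v, d₁ (actBlk g v) = σ19 g (d₁ v)) ∧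
      (∀ g v, d₂ (actBlk g v) = actBlk g (d₂ v)) ∧
      (∀ g v, d₃ (actBlk g v) = actBlk g (d₃ v)) ∧
      (∀ g v, d₄ (actBlk g v) = actBlk g (d₄ v)) ∧
      -- minimality: the differentials vanish at the origin on basis vectors,
      -- so the restriction of the resolution to the origin has terms exactly the
      -- direct sums of copies of ℂ, S₂, det S₂ recorded by (aᵢ, bᵢ, cᵢ)
      (∀ i, constantCoeff (d₁ (Pi.single i 1, 0, 0)) = 0) ∧
      (∀ i j, constantCoeff (d₁ (0, Pi.single i (Pi.single j (1 : R19)), 0)) = 0) ∧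
      (∀ i, constantCoeff (d₁ (0, 0, Pi.single i 1)) = 0) ∧
      (∀ i, BlkAtO (d₂ (Pi.single i 1, 0, 0))) ∧
      (∀ i j, BlkAtO (d₂ (0, Pi.single i (Pi.single j (1 : R19)), 0))) ∧
      (∀ i, BlkAtO (d₂ (0, 0, Pi.single i 1))) ∧
      (∀ i, BlkAtO (d₃ (Pi.single i 1, 0, 0))) ∧
      (∀ i j, BlkAtO (d₃ (0, Pi.single i (Pi.single j (1 : R19)), 0))) ∧
      (∀ i, BlkAtO (d₃ (0, 0, Pi.single i 1))) ∧
      (∀ i, BlkAtO (d₄ (Pi.single i 1, 0, 0))) ∧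
      (∀ i j, BlkAtO (d₄ (0, Pi.single i (Pi.single j (1 : R19)), 0))) ∧
      (∀ i, BlkAtO (d₄ (0, 0, Pi.single i 1))) ∧
      -- the irreducibles S₂ and det S₂ really occur
      (b₁ + b₂ + b₃ + b₄ ≠ 0) ∧ (c₁ + c₂ + c₃ + c₄ ≠ 0) := by
  refine ⟨2, 2, 0, 1, 4, 1, 0, 2, 2, 0, 0, 1, D1, D2, D3, D4, D4_inj, D34, D23, D12, range_D1,
    D1_equiv, D2_equiv, D3_equiv, D4_equiv, fun _ => D1_min _, fun _ _ => D1_min _,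
    fun _ => D1_min _, fun _ => D2_min _, fun _ _ => D2_min _, fun _ => D2_min _,
    fun _ => D3_min _, fun _ _ => D3_min _, fun _ => D3_min _, fun _ => D4_min _,
    fun _ _ => D4_min _, fun _ => D4_min _, by norm_num, by norm_num⟩

end
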